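/- Let (R, m, k) be a Cohen–Macaulay local ring with an isolated singularity. Then there exists a Cohen–Macaulay R-module X such that stHom_R(M, X) ≠ 0 for every non-free Cohen–Macaulay R-module M. -/

import Mathlib

/-!
Common definitions: Cohen-Macaulay modules, isolated singularities, stable Hom,
syzygies, transposes, Auslander-Reiten sequences, and the Grothendieck-type groups
`G(CM(R))`, `Ex(CM(R))`, `AR(CM(R))` from the paper
"Syzygies of Cohen-Macaulay modules and Grothendieck groups".

Throughout, the maximal ideal of a local ring is realized as the Jacobson radical
`(⊥ : Ideal R).jacobson` (for a local ring these coincide), which lets the definitions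
make sense without a `IsLocalRing` instance argument.
-/

namespace Paper

/-- A regular local ring: a Noetherian local ring whose maximal ideal (= Jacobson radical
of `⊥`) can be generated by `dim A` elements. -/
def IsRegularLocalRing (A : Type) [CommRing A] : Prop :=
  IsNoetherianRing A ∧ IsLocalRing A ∧
    ∃ s : Finset A, Ideal.span (s : Set A) = (⊥ : Ideal A).jacobson ∧
      (s.card : WithBot ℕ∞) = ringKrullDim A

/-- `M` is a (maximal) Cohen-Macaulay `R`-module: it is finitely generated, and it is either
zero or satisfies `depth M = dim R`, the latter being expressed by the existence of a weakly
`M`-regular sequence of length `dim R` consisting of elements of the maximal ideal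
(equivalently, since `depth M ≤ dim R` always holds for nonzero finitely generated `M` over a
Noetherian local ring `R`). -/
def IsMCM (R : Type) [CommRing R] (M : Type) [AddCommGroup M] [Module R M] : Prop :=
  Module.Finite R M ∧ (Subsingleton M ∨
    ∃ rs : List R, (∀ x ∈ rs, x ∈ (⊥ : Ideal R).jacobson) ∧
      RingTheory.Sequence.IsWeaklyRegular M rs ∧
      (rs.length : WithBot ℕ∞) = ringKrullDim R)

/-- The local ring `R` has an isolated singularity: `R_p` is regular local for every
prime `p` different from the maximal ideal. -/
def IsolatedSingularity (R : Type) [CommRing R] : Prop :=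
  ∀ (p : Ideal R) (_ : p.IsPrime), p ≠ (⊥ : Ideal R).jacobson →
    IsRegularLocalRing (Localization p.primeCompl)

section StableHom

variable (R : Type) [CommRing R]

/-- The submodule of `Hom_R(M,N)` consisting of homomorphisms factoring through a
finitely generated free module. -/
def stSub (M N : Type) [AddCommGroup M] [Module R M] [AddCommGroup N] [Module R N] :
    Submodule R (M →ₗ[R] N) :=
  Submodule.span R {f | ∃ (n : ℕ) (g : M →ₗ[R] (Fin n → R)) (h : (Fin n → R) →ₗ[R] N),
    f = h ∘ₗ g}

/-- The stable Hom module `stHom_R(M,N) = Hom_R(M,N)/{maps factoring through f.g. frees}`. -/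
abbrev StHom (M N : Type) [AddCommGroup M] [Module R M] [AddCommGroup N] [Module R N] :=
  (M →ₗ[R] N) ⧸ stSub R M N

/-- The map `stHom_R(M,N) → stHom_R(M,N')` induced by postcomposition with `φ : N →ₗ[R] N'`. -/
def stMapLeft {M N N' : Type} [AddCommGroup M] [Module R M] [AddCommGroup N] [Module R N]
    [AddCommGroup N'] [Module R N'] (φ : N →ₗ[R] N') : StHom R M N →ₗ[R] StHom R M N' :=
  Submodule.mapQ _ _ (LinearMap.llcomp R M N N' φ) (by
    rw [stSub, Submodule.span_le]
    rintro f ⟨n, g, h, rfl⟩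
    exact Submodule.subset_span ⟨n, g, φ ∘ₗ h, rfl⟩)

/-- The map `stHom_R(M,N) → stHom_R(M',N)` induced by precomposition with `φ : M' →ₗ[R] M`. -/
def stMapRight {M M' N : Type} [AddCommGroup M] [Module R M] [AddCommGroup M'] [Module R M']
    [AddCommGroup N] [Module R N] (φ : M' →ₗ[R] M) : StHom R M N →ₗ[R] StHom R M' N :=
  Submodule.mapQ _ _ (LinearMap.lcomp R N φ) (by
    rw [stSub, Submodule.span_le]
    rintro f ⟨n, g, h, rfl⟩
    exact Submodule.subset_span ⟨n, g ∘ₗ φ, h, rfl⟩)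

end StableHom

section Syzygies

variable (R : Type) [CommRing R]

/-- `S` is (isomorphic to) a first syzygy of `M`: the kernel of a minimal free cover
`π : R^n → M` (minimality: `ker π ⊆ m·R^n`). -/
def IsSyzygyOf (S M : Type) [AddCommGroup S] [Module R S] [AddCommGroup M] [Module R M] :
    Prop :=
  ∃ (n : ℕ) (π : (Fin n → R) →ₗ[R] M), Function.Surjective π ∧
    LinearMap.ker π ≤ (⊥ : Ideal R).jacobson • (⊤ : Submodule R (Fin n → R)) ∧
    Nonempty (S ≃ₗ[R] LinearMap.ker π)

/-- `S` belongs to `ΩCM(R)`: it is a first syzygy of some Cohen-Macaulay module. -/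
def MemOmegaCM (S : Type) [AddCommGroup S] [Module R S] : Prop :=
  ∃ N : ModuleCat.{0} R, IsMCM R N ∧ IsSyzygyOf R S N

/-- `M` has a nonzero free direct summand. -/
def HasFreeSummand (M : Type) [AddCommGroup M] [Module R M] : Prop :=
  ∃ P : ModuleCat.{0} R, Nonempty (M ≃ₗ[R] (P × R))

/-- `M'` is the non-free part of `M`: it has no nonzero free direct summand and
`M ≅ M' ⊕ R^a` for some `a ≥ 0`. -/
def IsNonfreePart (M M' : Type) [AddCommGroup M] [Module R M] [AddCommGroup M'] [Module R M'] :
    Prop :=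
  ¬ HasFreeSummand R M' ∧ ∃ a : ℕ, Nonempty (M ≃ₗ[R] (M' × (Fin a → R)))

/-- `M` is an indecomposable module: nonzero, and in any decomposition `M ≅ P × Q`
one factor vanishes. -/
def Indecomp (M : Type) [AddCommGroup M] [Module R M] : Prop :=
  ¬ Subsingleton M ∧ ∀ (P Q : ModuleCat.{0} R), Nonempty (M ≃ₗ[R] (P × Q)) →
    Subsingleton P ∨ Subsingleton Q

/-- `A` is a direct summand of `B`. -/
def IsSummandOf (A B : Type) [AddCommGroup A] [Module R A] [AddCommGroup B] [Module R B] :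
    Prop :=
  ∃ C : ModuleCat.{0} R, Nonempty (B ≃ₗ[R] (A × C))

/-- A linear map is a split epimorphism if it has a right inverse. -/
def IsSplitEpi {M N : Type} [AddCommGroup M] [Module R M] [AddCommGroup N] [Module R N]
    (g : M →ₗ[R] N) : Prop :=
  ∃ s : N →ₗ[R] M, g ∘ₗ s = LinearMap.id

/-- `0 → A → B → C → 0` (given by `f`, `g`) is an Auslander-Reiten sequence: a non-split
short exact sequence of finitely generated modules with `A`, `C` indecomposable non-free,
such that every non-split-epi map `X → C` from a finitely generated module factors
through `g : B → C`. -/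
def IsARSequence {A B C : Type} [AddCommGroup A] [Module R A] [AddCommGroup B] [Module R B]
    [AddCommGroup C] [Module R C] (f : A →ₗ[R] B) (g : B →ₗ[R] C) : Prop :=
  Module.Finite R A ∧ Module.Finite R B ∧ Module.Finite R C ∧
  Function.Injective f ∧ Function.Surjective g ∧ Function.Exact f g ∧
  ¬ IsSplitEpi R g ∧
  Indecomp R A ∧ ¬ Module.Free R A ∧ Indecomp R C ∧ ¬ Module.Free R C ∧
  ∀ (X : ModuleCat.{0} R) (h : (X : Type) →ₗ[R] C), Module.Finite R X → ¬ IsSplitEpi R h →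
    ∃ l : (X : Type) →ₗ[R] B, g ∘ₗ l = h

/-- `R` is of finite CM type: finitely many isomorphism classes of indecomposable
Cohen-Macaulay modules. -/
def FiniteCMType : Prop :=
  ∃ L : List (ModuleCat.{0} R), ∀ U : ModuleCat.{0} R, IsMCM R U → Indecomp R U →
    ∃ V ∈ L, Nonempty ((U : Type) ≃ₗ[R] (V : Type))

/-- `R` is of finite ΩCM type: finitely many isomorphism classes of indecomposable
modules in `ΩCM(R)`. -/
def FiniteOmegaCMType : Prop :=
  ∃ L : List (ModuleCat.{0} R), ∀ U : ModuleCat.{0} R, Module.Finite R U → Indecomp R U →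
    MemOmegaCM R U → ∃ V ∈ L, Nonempty ((U : Type) ≃ₗ[R] (V : Type))

/-- There are only finitely many isomorphism classes of indecomposable direct summands of
first syzygies of Cohen-Macaulay `R`-modules. -/
def FiniteSyzygySummandType : Prop :=
  ∃ L : List (ModuleCat.{0} R), ∀ U : ModuleCat.{0} R, Module.Finite R U → Indecomp R U →
    (∃ S : ModuleCat.{0} R, MemOmegaCM R S ∧ IsSummandOf R (U : Type) S) →
    ∃ V ∈ L, Nonempty ((U : Type) ≃ₗ[R] (V : Type))

end Syzygies

section Grothendieck

variable (R : Type) [CommRing R]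

/-- The Cohen-Macaulay `R`-modules, as objects of `ModuleCat R`. -/
def CMMod := {M : ModuleCat.{0} R // IsMCM R M}

/-- The relations `[X] + [Z] - [Y]` with `Y ≅ X ⊕ Z`, defining `G(CM(R))` as a quotient
of the free abelian group on the Cohen-Macaulay modules. -/
def GRel : AddSubgroup (FreeAbelianGroup (CMMod R)) :=
  AddSubgroup.closure {a | ∃ X Z Y : CMMod R,
    Nonempty ((Y.1 : Type) ≃ₗ[R] ((X.1 : Type) × (Z.1 : Type))) ∧
    a = FreeAbelianGroup.of X + FreeAbelianGroup.of Z - FreeAbelianGroup.of Y}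

/-- The group `G(CM(R))`: the free abelian group on the isomorphism classes of
Cohen-Macaulay `R`-modules (realized as the free abelian group on all Cohen-Macaulay
modules modulo the direct sum relations). -/
abbrev GCM := FreeAbelianGroup (CMMod R) ⧸ GRel R

/-- The class of an element of the free abelian group in `G(CM(R))`. -/
def gcls : FreeAbelianGroup (CMMod R) →+ GCM R := QuotientAddGroup.mk' _

/-- The subgroup `Ex(CM(R))` of `G(CM(R))` generated by `[X]+[Z]-[Y]` coming from short
exact sequences `0 → Z → Y → X → 0` of Cohen-Macaulay modules. -/
def ExCM : AddSubgroup (GCM R) :=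
  AddSubgroup.closure {x | ∃ (X Z Y : CMMod R) (f : (Z.1 : Type) →ₗ[R] (Y.1 : Type))
    (g : (Y.1 : Type) →ₗ[R] (X.1 : Type)), Function.Injective f ∧ Function.Surjective g ∧
    Function.Exact f g ∧
    x = gcls R (FreeAbelianGroup.of X + FreeAbelianGroup.of Z - FreeAbelianGroup.of Y)}

/-- The subgroup `AR(CM(R))` of `G(CM(R))` generated by `[X]+[Z]-[Y]` coming from
Auslander-Reiten sequences `0 → Z → Y → X → 0` of Cohen-Macaulay modules. -/
def ARCM : AddSubgroup (GCM R) :=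
  AddSubgroup.closure {x | ∃ (X Z Y : CMMod R) (f : (Z.1 : Type) →ₗ[R] (Y.1 : Type))
    (g : (Y.1 : Type) →ₗ[R] (X.1 : Type)), IsARSequence R f g ∧
    x = gcls R (FreeAbelianGroup.of X + FreeAbelianGroup.of Z - FreeAbelianGroup.of Y)}

/-- The image of a subgroup `H ≤ G(CM(R))` in `G(CM(R)) ⊗_ℤ ℚ`: the `ℚ`-subspace spanned by
the image of `H`. The equality `ratSpan R (ExCM R) = ratSpan R (ARCM R)` expresses
`Ex(CM(R)) ⊗_ℤ ℚ = AR(CM(R)) ⊗_ℤ ℚ` inside `G(CM(R)) ⊗_ℤ ℚ`. -/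
def ratSpan (H : AddSubgroup (GCM R)) : Submodule ℚ (TensorProduct ℤ ℚ (GCM R)) :=
  Submodule.span ℚ {x | ∃ g ∈ H, x = (1 : ℚ) ⊗ₜ[ℤ] g}

end Grothendieck

section Transpose

variable (R : Type) [CommRing R]

/-- The data of a minimal free presentation `R^{n1} --d--> R^{n0} --p--> M → 0`. -/
structure PresData (M : Type) [AddCommGroup M] [Module R M] where
  n1 : ℕ
  n0 : ℕ
  d : (Fin n1 → R) →ₗ[R] (Fin n0 → R)
  p : (Fin n0 → R) →ₗ[R] M
  surj : Function.Surjective p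
  exact : LinearMap.range d = LinearMap.ker p
  min0 : LinearMap.ker p ≤ (⊥ : Ideal R).jacobson • (⊤ : Submodule R (Fin n0 → R))
  min1 : LinearMap.ker d ≤ (⊥ : Ideal R).jacobson • (⊤ : Submodule R (Fin n1 → R))

/-- The (Auslander) transpose determined by a minimal free presentation: the cokernel of
the dual map `(R^{n0})^* → (R^{n1})^*`. -/
abbrev TrOf {M : Type} [AddCommGroup M] [Module R M] (D : PresData R M) : Type :=
  Module.Dual R (Fin D.n1 → R) ⧸ LinearMap.range D.d.dualMap

/-- The data of a minimal free cover `p : R^n → M`. -/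
structure SyzData (M : Type) [AddCommGroup M] [Module R M] where
  n : ℕ
  p : (Fin n → R) →ₗ[R] M
  surj : Function.Surjective p
  min : LinearMap.ker p ≤ (⊥ : Ideal R).jacobson • (⊤ : Submodule R (Fin n → R))

/-- The first syzygy determined by a minimal free cover. -/
abbrev SyzOf {M : Type} [AddCommGroup M] [Module R M] (D : SyzData R M) : Type :=
  LinearMap.ker D.p

/-- The data needed to construct `Ω⁻¹ M = Tr Ω Tr M`. -/
structure CosyzData (M : Type) [AddCommGroup M] [Module R M] where
  P : PresData R M
  S : SyzData R (TrOf R P)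
  Q : PresData R (SyzOf R S)

/-- The cosyzygy `Ω⁻¹ M = Tr Ω Tr M` determined by the data `D`. -/
abbrev CosyzOf {M : Type} [AddCommGroup M] [Module R M] (D : CosyzData R M) : Type :=
  TrOf R D.Q

/-- The map `t : Tr M → Tr M'` represents the transpose `Tr φ` of `φ : M' → M`
(with respect to the chosen minimal presentations). -/
def RepresentsTr {M M' : Type} [AddCommGroup M] [Module R M] [AddCommGroup M'] [Module R M']
    (D : PresData R M) (D' : PresData R M') (φ : M' →ₗ[R] M)
    (t : TrOf R D →ₗ[R] TrOf R D') : Prop :=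
  ∃ (φ0 : (Fin D'.n0 → R) →ₗ[R] (Fin D.n0 → R)) (φ1 : (Fin D'.n1 → R) →ₗ[R] (Fin D.n1 → R)),
    D.p ∘ₗ φ0 = φ ∘ₗ D'.p ∧ D.d ∘ₗ φ1 = φ0 ∘ₗ D'.d ∧
    t ∘ₗ (LinearMap.range D.d.dualMap).mkQ = (LinearMap.range D'.d.dualMap).mkQ ∘ₗ φ1.dualMap

/-- The map `v : Ω Y → Ω Y'` represents the syzygy `Ω ψ` of `ψ : Y → Y'`
(with respect to the chosen minimal covers). -/
def RepresentsOmega {Y Y' : Type} [AddCommGroup Y] [Module R Y] [AddCommGroup Y'] [Module R Y']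
    (D : SyzData R Y) (D' : SyzData R Y') (ψ : Y →ₗ[R] Y')
    (v : SyzOf R D →ₗ[R] SyzOf R D') : Prop :=
  ∃ h : (Fin D.n → R) →ₗ[R] (Fin D'.n → R), D'.p ∘ₗ h = ψ ∘ₗ D.p ∧
    (LinearMap.ker D'.p).subtype ∘ₗ v = h ∘ₗ (LinearMap.ker D.p).subtype

/-- The map `w : Ω⁻¹ X' → Ω⁻¹ X` represents `Ω⁻¹ φ = Tr Ω Tr φ` for `φ : X' → X`. -/
def RepresentsOmegaInv {X X' : Type} [AddCommGroup X] [Module R X] [AddCommGroup X']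
    [Module R X'] (C : CosyzData R X) (C' : CosyzData R X') (φ : X' →ₗ[R] X)
    (w : CosyzOf R C' →ₗ[R] CosyzOf R C) : Prop :=
  ∃ (t : TrOf R C.P →ₗ[R] TrOf R C'.P) (v : SyzOf R C.S →ₗ[R] SyzOf R C'.S),
    RepresentsTr R C.P C'.P φ t ∧ RepresentsOmega R C.S C'.S t v ∧
    RepresentsTr R C'.Q C.Q v w

end Transpose

/-- `M` has injective dimension at most `n` as an `R`-module. -/
def InjDimLE (R : Type) [CommRing R] : ℕ → ModuleCat.{0} R → Prop
  | 0, M => Module.Injective R M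
  | n+1, M => ∃ (I : ModuleCat.{0} R) (f : (M : Type) →ₗ[R] (I : Type)),
      Module.Injective R I ∧ Function.Injective f ∧
      InjDimLE R n (ModuleCat.of R ((I : Type) ⧸ LinearMap.range f))

/-- A Gorenstein local ring: a Noetherian local ring of finite injective dimension as a
module over itself. -/
def IsGorensteinLocal (R : Type) [CommRing R] : Prop :=
  IsNoetherianRing R ∧ IsLocalRing R ∧ ∃ n : ℕ, InjDimLE R n (ModuleCat.of R R)

/-- The length of an `R`-module, expressed as the Krull dimension of its lattice of
submodules. -/
noncomputable def modLength (R M : Type) [CommRing R] [AddCommGroup M] [Module R M] :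
    WithBot ℕ∞ :=
  Order.krullDim (Submodule R M)

/-!
Let `d = dim R` and take `X = Ω^d k`, the `d`-th syzygy of the residue field; it has depth `d` by
the depth lemma. Localizations of a Cohen-Macaulay module `M` at non-maximal primes are
Cohen-Macaulay over regular local rings, so `M` is free on the punctured spectrum.

Suppose `stHom_R(M, Ω^d k) = 0`, and let `φ : M → F` be a left free approximation, i.e. every map
from `M` to a free module extends along `φ`. As `M` has positive depth and is free on the punctured
spectrum, `φ` is injective. Its cokernel `C` is again free on the punctured spectrum, has depth at
least `d - 1`, and satisfies `stHom_R(C, Ω^(d-1) k) = 0`. After `d` such steps one reaches a module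
with no nonzero stable map to `k`, which is free by Nakayama's lemma. Going back, each kernel of a
surjection between free modules is free, hence so is `M`.
-/

open CategoryTheory IsLocalRing RingTheory.Sequence
open scoped Pointwise

universe u

section Grade

/-- `I` contains a weakly `M`-regular sequence of length `n`. For `I` inside the Jacobson radical
and `M` finite and nonzero this says that the grade of `I` on `M` (the depth of `M`, if `I` is the
maximal ideal of a local ring) is at least `n`; the zero module satisfies it for every `n`. -/
def GradeGE {R : Type*} [CommRing R] (I : Ideal R) (M : Type*) [AddCommGroup M] [Module R M]
    (n : ℕ) : Prop :=
  ∃ rs : List R, rs.length = n ∧ (∀ x ∈ rs, x ∈ I) ∧ IsWeaklyRegular M rs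

section

variable {R M N : Type*} [CommRing R] {I : Ideal R} {n : ℕ} [AddCommGroup M] [Module R M]
  [AddCommGroup N] [Module R N]

lemma gradeGE_zero (I : Ideal R) (M : Type*) [AddCommGroup M] [Module R M] : GradeGE I M 0 :=
  ⟨[], rfl, by simp, .nil R M⟩

lemma GradeGE.cons {x : R} (hx : x ∈ I) (hreg : IsSMulRegular M x)
    (h : GradeGE I (QuotSMulTop x M) n) : GradeGE I M (n + 1) := by
  obtain ⟨rs, rfl, hrs, hreg'⟩ := h
  exact ⟨x :: rs, rfl, List.forall_mem_cons.2 ⟨hx, hrs⟩, hreg'.cons hreg⟩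

lemma GradeGE.exists_cons (h : GradeGE I M (n + 1)) :
    ∃ x ∈ I, IsSMulRegular M x ∧ GradeGE I (QuotSMulTop x M) n := by
  obtain ⟨_ | ⟨x, rs⟩, hlen, hrs, hreg⟩ := h
  · simp at hlen
  · rw [isWeaklyRegular_cons_iff] at hreg
    rw [List.forall_mem_cons] at hrs
    exact ⟨x, hrs.1, hreg.1, rs, Nat.succ_injective hlen, hrs.2, hreg.2⟩

lemma GradeGE.of_subsingleton [Subsingleton M] (I : Ideal R) (n : ℕ) : GradeGE I M n := by
  induction n generalizing M with
  | zero => exact gradeGE_zero I M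
  | succ n ih => exact .cons I.zero_mem (fun _ _ _ => Subsingleton.elim _ _) ih

lemma GradeGE.of_flat [Module.Flat R M] (h : GradeGE I R n) : GradeGE I M n := by
  obtain ⟨rs, hlen, hrs, hreg⟩ := h
  exact ⟨rs, hlen, hrs,
    ((TensorProduct.lid R M).isWeaklyRegular_congr rs).1 hreg.isWeaklyRegular_rTensor⟩

lemma GradeGE.of_isLocalizedModule_atPrime (p : Ideal R) [p.IsPrime] (A : Type*) [CommRing A]
    [Algebra R A] [IsLocalization.AtPrime A p] [IsLocalRing A] [Module A N] [IsScalarTower R A N]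
    (f : M →ₗ[R] N) [IsLocalizedModule.AtPrime p f] (h : GradeGE p M n) :
    GradeGE (maximalIdeal A) N n := by
  obtain ⟨rs, rfl, hrs, hreg⟩ := h
  refine ⟨rs.map (algebraMap R A), by simp, ?_, hreg.of_isLocalizedModule A p.primeCompl f⟩
  simpa only [List.forall_mem_map, IsLocalization.AtPrime.to_map_mem_maximal_iff A p] using hrs

end

lemma subsingleton_ext_X₃ {C : Type*} [Category* C] [Abelian C] [HasExt C] (K : C)
    {S : ShortComplex C} (hS : S.ShortExact) {n : ℕ}
    (h₁ : ∀ i < n + 1, Subsingleton (Abelian.Ext K S.X₁ i))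
    (h₂ : ∀ i < n, Subsingleton (Abelian.Ext K S.X₂ i)) :
    ∀ i < n, Subsingleton (Abelian.Ext K S.X₃ i) := by
  intro i hi
  have zero₂ := AddCommGrpCat.isZero_of_iff_subsingleton.2 (h₂ i hi)
  have zero₁ := AddCommGrpCat.isZero_of_iff_subsingleton.2 (h₁ (i + 1) (by omega))
  exact AddCommGrpCat.subsingleton_of_isZero <|
    (Abelian.Ext.covariant_sequence_exact₃' K hS i (i + 1) rfl).isZero_of_both_zeros
      (zero₂.eq_zero_of_src _) (zero₁.eq_zero_of_tgt _)

lemma subsingleton_ext_X₁ {C : Type*} [Category* C] [Abelian C] [HasExt C] (K : C)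
    {S : ShortComplex C} (hS : S.ShortExact) {n : ℕ}
    (h₂ : ∀ i < n + 1, Subsingleton (Abelian.Ext K S.X₂ i))
    (h₃ : ∀ i < n, Subsingleton (Abelian.Ext K S.X₃ i)) :
    ∀ i < n + 1, Subsingleton (Abelian.Ext K S.X₁ i) := by
  rintro (_ | i) hi
  · have : Subsingleton (K ⟶ S.X₂) := Abelian.Ext.addEquiv₀.subsingleton_congr.1 (h₂ 0 hi)
    have := hS.mono_f
    have : Subsingleton (K ⟶ S.X₁) :=
      ⟨fun a b => (cancel_mono S.f).1 (Subsingleton.elim (a ≫ S.f) (b ≫ S.f))⟩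
    exact Abelian.Ext.addEquiv₀.subsingleton
  · have zero₃ := AddCommGrpCat.isZero_of_iff_subsingleton.2 (h₃ i (by omega))
    have zero₂ := AddCommGrpCat.isZero_of_iff_subsingleton.2 (h₂ (i + 1) hi)
    exact AddCommGrpCat.subsingleton_of_isZero <|
      (Abelian.Ext.covariant_sequence_exact₁' K hS i (i + 1) rfl).isZero_of_both_zeros
        (zero₃.eq_zero_of_src _) (zero₂.eq_zero_of_tgt _)

variable {R : Type u} [CommRing R] [IsNoetherianRing R] {I : Ideal R} {n : ℕ}
  {A B C : Type u} [AddCommGroup A] [Module R A] [AddCommGroup B] [Module R B]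
  [AddCommGroup C] [Module R C] [Module.Finite R A] [Module.Finite R B] [Module.Finite R C]

lemma gradeGE_iff_subsingleton_ext (hI : I ≤ (⊥ : Ideal R).jacobson) :
    GradeGE I A n ↔
      ∀ i < n, Subsingleton (Abelian.Ext (ModuleCat.of R (R ⧸ I)) (ModuleCat.of R A) i) := by
  rcases subsingleton_or_nontrivial A with hA | hA
  · have hzero := ModuleCat.isZero_of_subsingleton (ModuleCat.of R A)
    refine iff_of_true (.of_subsingleton I n) fun i _ => ?_
    refine ⟨fun a b => ?_⟩
    rw [← Abelian.Ext.comp_mk₀_id a, ← Abelian.Ext.comp_mk₀_id b, hzero.eq_zero_of_src (𝟙 _)]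
    simp only [Abelian.Ext.mk₀_zero, Abelian.Ext.comp_zero]
  have hI' : I ≤ (Module.annihilator R A).jacobson := hI.trans (Ideal.jacobson_mono bot_le)
  have hlt : I • (⊤ : Submodule R A) < ⊤ :=
    (Submodule.top_ne_ideal_smul_of_le_jacobson_annihilator hI').symm.lt_top
  have hsupp : Module.support R (R ⧸ I) = PrimeSpectrum.zeroLocus I := by
    rw [Module.support_eq_zeroLocus, Ideal.annihilator_quotient]
  constructor
  · rintro ⟨rs, rfl, hrs, hreg⟩
    exact ModuleCat.subsingleton_ext_of_exists_isRegular I (ModuleCat.of R (R ⧸ I)) hsupp.le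
      (ModuleCat.of R A) hlt rs hrs
      ((isRegular_iff_isWeaklyRegular_of_subset_jacobson_annihilator fun r hr => hI' (hrs r hr)).2
        hreg)
  · intro h
    obtain ⟨rs, hlen, hrs, hreg⟩ := ModuleCat.exists_isRegular_of_exists_subsingleton_ext I n
      (ModuleCat.of R A) hlt (ModuleCat.of R (R ⧸ I)) hsupp h
    exact ⟨rs, hlen, hrs, hreg.1⟩

lemma GradeGE.mono {m : ℕ} (hI : I ≤ (⊥ : Ideal R).jacobson) (hmn : m ≤ n) (h : GradeGE I A n) :
    GradeGE I A m := by
  rw [gradeGE_iff_subsingleton_ext hI] at h ⊢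
  exact fun i hi => h i (hi.trans_le hmn)

lemma GradeGE.of_exact_right {f : A →ₗ[R] B} {g : B →ₗ[R] C} (hI : I ≤ (⊥ : Ideal R).jacobson)
    (hf : Function.Injective f) (hg : Function.Surjective g) (hfg : Function.Exact f g)
    (hA : GradeGE I A (n + 1)) (hB : GradeGE I B n) : GradeGE I C n := by
  rw [gradeGE_iff_subsingleton_ext hI] at hA hB ⊢
  exact subsingleton_ext_X₃ _ (ModuleCat.shortComplex_shortExact
    (ModuleCat.shortComplexOfCompEqZero f g hfg.linearMap_comp_eq_zero) hfg hf hg) hA hB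

lemma GradeGE.of_exact_left {f : A →ₗ[R] B} {g : B →ₗ[R] C} (hI : I ≤ (⊥ : Ideal R).jacobson)
    (hf : Function.Injective f) (hg : Function.Surjective g) (hfg : Function.Exact f g)
    (hB : GradeGE I B (n + 1)) (hC : GradeGE I C n) : GradeGE I A (n + 1) := by
  rw [gradeGE_iff_subsingleton_ext hI] at hB hC ⊢
  exact subsingleton_ext_X₁ _ (ModuleCat.shortComplex_shortExact
    (ModuleCat.shortComplexOfCompEqZero f g hfg.linearMap_comp_eq_zero) hfg hf hg) hB hC

lemma GradeGE.quotSMulTop (hI : I ≤ (⊥ : Ideal R).jacobson) {x : R} (hx : IsSMulRegular A x)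
    (h : GradeGE I A (n + 1)) : GradeGE I (QuotSMulTop x A) n :=
  .of_exact_right (f := LinearMap.lsmul R A x) (g := (x • (⊤ : Submodule R A)).mkQ) hI hx
    (Submodule.mkQ_surjective _) (LinearMap.exact_lsmul_mkQ_smul_top A x) h (h.mono hI n.le_succ)

end Grade

section AssociatedPrimes

variable {R M : Type*} [CommRing R] [IsNoetherianRing R] [AddCommGroup M] [Module R M]

lemma notMem_of_isSMulRegular_of_mem_associatedPrimes {p : Ideal R}
    (hp : p ∈ associatedPrimes R M) {x : R} (hx : IsSMulRegular M x) : x ∉ p := fun hxp => by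
  have hxU : x ∈ ⋃ p ∈ associatedPrimes R M, (p : Set R) := Set.mem_biUnion hp hxp
  rw [biUnion_associatedPrimes_eq_compl_regular R M] at hxU
  exact hxU hx

variable [Module.Finite R M]

lemma exists_mem_notMem_isSMulRegular {I J : Ideal R} (hIJ : ¬ I ≤ J)
    (hI : ∀ p ∈ associatedPrimes R M, ¬ I ≤ p) : ∃ x ∈ I, x ∉ J ∧ IsSMulRegular M x := by
  classical
  have hfin := associatedPrimes.finite R M
  by_contra! hcon
  have hcover : (I : Set R) ⊆ ⋃ p ∈ (↑(insert J hfin.toFinset) : Set (Ideal R)), (p : Set R) := by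
    intro x hx
    by_cases hxJ : x ∈ J
    · exact Set.mem_biUnion (by simp) hxJ
    have hx' : x ∈ ⋃ p ∈ associatedPrimes R M, (p : Set R) := by
      rw [biUnion_associatedPrimes_eq_compl_regular R M]
      exact hcon x hx hxJ
    obtain ⟨p, hp, hxp⟩ := Set.mem_iUnion₂.1 hx'
    exact Set.mem_biUnion (by simp [hp]) hxp
  obtain ⟨p, hp, hle⟩ := (Ideal.subset_union_prime (f := id) J J (fun p hp hpJ _ =>
    (hfin.mem_toFinset.1 (Finset.mem_of_mem_insert_of_ne hp hpJ)).1)).1 hcover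
  rcases Finset.mem_insert.1 hp with rfl | hp
  · exact hIJ hle
  · exact hI p (hfin.mem_toFinset.1 hp) hle

lemma torsionBySet_not_le_smul_top {J : Ideal R} {x : R} (hxJ : x ∈ (⊥ : Ideal R).jacobson)
    (hx : IsSMulRegular M x) (hJ : Submodule.torsionBySet R M (J : Set R) ≠ ⊥) :
    ¬ Submodule.torsionBySet R M (J : Set R) ≤ x • ⊤ := by
  refine fun hle => hJ (Submodule.eq_bot_of_le_smul_of_le_jacobson_bot (Ideal.span {x}) _
    (IsNoetherian.noetherian _) (fun y hy => ?_) (by simpa [Ideal.span_le] using hxJ))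
  obtain ⟨z, -, rfl⟩ := (Submodule.mem_smul_pointwise_iff_exists _ _ _).1 (hle hy)
  refine Submodule.smul_mem_smul (Ideal.mem_span_singleton_self x) ?_
  rw [Submodule.mem_torsionBySet_iff] at hy ⊢
  exact fun a => hx (by simpa only [smul_comm x, smul_zero] using hy a)

lemma exists_lt_isAssociatedPrime_quotSMulTop {p : Ideal R} (hp : IsAssociatedPrime p M) {x : R}
    (hxJ : x ∈ (⊥ : Ideal R).jacobson) (hx : IsSMulRegular M x) :
    ∃ q, IsAssociatedPrime q (QuotSMulTop x M) ∧ p < q := by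
  obtain ⟨hprime, y₀, hy₀⟩ := isAssociatedPrime_iff.1 hp
  have mem_p {a : R} : a ∈ p ↔ a • y₀ = 0 := by
    rw [hy₀, Submodule.mem_colon_singleton, Submodule.mem_bot]
  have hy₀0 : y₀ ≠ 0 := fun h => hprime.ne_top ((Ideal.eq_top_iff_one p).2 (mem_p.2 (by simp [h])))
  have hxp : x ∉ p := notMem_of_isSMulRegular_of_mem_associatedPrimes hp hx
  have htors : Submodule.torsionBySet R M (p : Set R) ≠ ⊥ := (Submodule.ne_bot_iff _).2
    ⟨y₀, (Submodule.mem_torsionBySet_iff _ _).2 fun a => mem_p.1 a.2, hy₀0⟩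
  obtain ⟨y, hy, hyx⟩ := SetLike.not_le_iff_exists.1 (torsionBySet_not_le_smul_top hxJ hx htors)
  obtain ⟨q, hq, hle⟩ := exists_le_isAssociatedPrime_of_isNoetherianRing R
    (Submodule.Quotient.mk y : QuotSMulTop x M) (mt (Submodule.Quotient.mk_eq_zero _).1 hyx)
  have mem_q {a : R} (ha : a • y ∈ x • (⊤ : Submodule R M)) : a ∈ q := hle <| by
    rwa [Submodule.mem_colon_singleton, Submodule.mem_bot, ← Submodule.Quotient.mk_smul,
      Submodule.Quotient.mk_eq_zero]
  refine ⟨q, hq, SetLike.lt_iff_le_and_exists.2 ⟨fun a ha => mem_q ?_, x, mem_q ?_, hxp⟩⟩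
  · rw [(Submodule.mem_torsionBySet_iff _ _).1 hy ⟨a, ha⟩]
    exact zero_mem _
  · exact Submodule.smul_mem_pointwise_smul _ _ _ trivial

variable [IsLocalRing R]

lemma GradeGE.height_add_le {n : ℕ} (h : GradeGE (maximalIdeal R) M n) {p : Ideal R}
    (hp : IsAssociatedPrime p M) : p.height + n ≤ (maximalIdeal R).height := by
  induction n generalizing M p with
  | zero => simpa using Ideal.height_mono (le_maximalIdeal hp.1.ne_top)
  | succ n ih =>
    obtain ⟨x, hxm, hx, hquot⟩ := h.exists_cons
    obtain ⟨q, hq, hpq⟩ :=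
      exists_lt_isAssociatedPrime_quotSMulTop hp (maximalIdeal_le_jacobson _ hxm) hx
    have := hp.1
    have := hq.1
    calc p.height + (n + 1 : ℕ) = p.height + 1 + n := by push_cast; ring
      _ ≤ q.height + n := by gcongr; exact Ideal.height_add_one_le_of_lt_of_isPrime hpq
      _ ≤ (maximalIdeal R).height := ih hquot hq

-- `c` bounds the height of every associated prime of `M`, so as long as the height of `p` exceeds
-- `c`, prime avoidance yields a nonzerodivisor in `p`; dividing it out turns `c` into `c + 1`.
lemma GradeGE.of_add_le_height {R M : Type u} [CommRing R] [IsNoetherianRing R] [IsLocalRing R]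
    [AddCommGroup M] [Module R M] [Module.Finite R M] {c k n : ℕ}
    (h : GradeGE (maximalIdeal R) M k) (hc : (maximalIdeal R).height ≤ c + k) {p : Ideal R}
    [p.IsPrime] (hp : n + c ≤ p.height) : GradeGE p M n := by
  induction n generalizing M c k with
  | zero => exact gradeGE_zero p M
  | succ n ih =>
    have hlt : (c : ℕ∞) < p.height := lt_of_lt_of_le (by norm_cast; omega) hp
    have hle : p.height ≤ (maximalIdeal R).height :=
      Ideal.height_mono (le_maximalIdeal (Ideal.IsPrime.ne_top ‹_›))
    have hk : k ≠ 0 := by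
      rintro rfl
      exact (hlt.trans_le hle).not_ge (by simpa using hc)
    obtain ⟨k, rfl⟩ := Nat.exists_eq_succ_of_ne_zero hk
    have hp0 : ¬ p ≤ ⊥ := fun h0 => by simp [le_bot_iff.1 h0] at hlt
    have hass : ∀ q ∈ associatedPrimes R M, ¬ p ≤ q := fun q hq hpq => by
      have hqc := (h.height_add_le hq).trans hc
      rw [ENat.add_le_add_iff_right (ENat.natCast_ne_top _)] at hqc
      exact hlt.not_ge ((Ideal.height_mono hpq).trans hqc)
    obtain ⟨x, hxp, -, hx⟩ := exists_mem_notMem_isSMulRegular hp0 hass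
    refine .cons hxp hx (ih (c := c + 1) (h.quotSMulTop (maximalIdeal_le_jacobson _) hx) ?_ ?_)
    · exact hc.trans_eq (by push_cast; ring)
    · exact le_trans (by push_cast; exact (by ring : _ = _).le) hp

end AssociatedPrimes

section RegularLocalRing

lemma isLocalRing_quotient_span_singleton {A : Type*} [CommRing A] [IsLocalRing A] {x : A}
    (hx : x ∈ maximalIdeal A) : IsLocalRing (A ⧸ Ideal.span {x}) :=
  have : Nontrivial (A ⧸ Ideal.span {x}) :=
    Ideal.Quotient.nontrivial_iff.2 (mt Ideal.span_singleton_eq_top.1 hx)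
  .of_surjective' (Ideal.Quotient.mk _) Ideal.Quotient.mk_surjective

lemma exists_mem_span_insert_range_succAbove {A : Type*} [CommRing A] [IsLocalRing A] {n : ℕ}
    {s : Fin (n + 1) → A} (hs : ∀ i, s i ∈ maximalIdeal A) {x : A}
    (hx : x ∈ Ideal.span (Set.range s)) (hx2 : x ∉ maximalIdeal A ^ 2) :
    ∃ j, s j ∈ Ideal.span (insert x (Set.range fun i => s (j.succAbove i))) := by
  obtain ⟨c, rfl⟩ := (Submodule.mem_span_range_iff_exists_fun A).1 hx
  obtain ⟨j, hj⟩ : ∃ j, c j ∉ maximalIdeal A := by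
    by_contra! hc
    exact hx2 (sq (maximalIdeal A) ▸ Ideal.sum_mem _ fun i _ => Ideal.mul_mem_mul (hc i) (hs i))
  refine ⟨j, (Ideal.unit_mul_mem_iff_mem _ (notMem_maximalIdeal.1 hj)).1 ?_⟩
  have hcj : c j * s j = ∑ i, c i • s i - ∑ i, c (j.succAbove i) * s (j.succAbove i) := by
    simp [Fin.sum_univ_succAbove _ j]
  rw [hcj]
  exact sub_mem (Ideal.subset_span (Set.mem_insert _ _)) (Ideal.sum_mem _ fun i _ =>
    Ideal.mul_mem_left _ _ (Ideal.subset_span (Set.mem_insert_of_mem _ ⟨i, rfl⟩)))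

lemma exists_span_range_eq_maximalIdeal_quotient {A : Type*} [CommRing A] [IsLocalRing A] {n : ℕ}
    {s : Fin (n + 1) → A} (hs : Ideal.span (Set.range s) = maximalIdeal A) {x : A}
    (hx : x ∈ maximalIdeal A) (hx2 : x ∉ maximalIdeal A ^ 2) [IsLocalRing (A ⧸ Ideal.span {x})] :
    ∃ t : Fin n → A ⧸ Ideal.span {x},
      Ideal.span (Set.range t) = maximalIdeal (A ⧸ Ideal.span {x}) := by
  have hsm (i) : s i ∈ maximalIdeal A := hs ▸ Ideal.subset_span ⟨i, rfl⟩
  obtain ⟨j, hj⟩ := exists_mem_span_insert_range_succAbove hsm (hs ▸ hx) hx2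
  let T := Set.range fun i => s (j.succAbove i)
  have hspan : Ideal.span (insert x T) = maximalIdeal A := by
    refine le_antisymm (Ideal.span_le.2 (Set.insert_subset hx ?_)) (hs ▸ Ideal.span_le.2 ?_)
    · rintro _ ⟨i, rfl⟩
      exact hsm _
    · rintro _ ⟨i, rfl⟩
      rcases Fin.eq_self_or_eq_succAbove j i with rfl | ⟨i, rfl⟩
      · exact hj
      · exact Ideal.subset_span (Set.mem_insert_of_mem _ ⟨i, rfl⟩)
  refine ⟨fun i => Ideal.Quotient.mk _ (s (j.succAbove i)), ?_⟩
  have hx0 : Ideal.Quotient.mk (Ideal.span {x}) x = 0 :=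
    Ideal.Quotient.eq_zero_iff_mem.2 (Ideal.mem_span_singleton_self x)
  rw [← map_maximalIdeal_of_surjective _ Ideal.Quotient.mk_surjective, ← hspan, Ideal.map_span,
    Set.image_insert_eq, hx0, Ideal.span_insert_zero, ← Set.range_comp]
  rfl

lemma GradeGE.quotient_span_singleton {A : Type*} [CommRing A] [IsLocalRing A] {x : A}
    [IsLocalRing (A ⧸ Ideal.span {x})] {P : Type*} [AddCommGroup P] [Module A P] {n : ℕ}
    (h : GradeGE (maximalIdeal A) (QuotSMulTop x P) n) :
    GradeGE (maximalIdeal (A ⧸ Ideal.span {x})) (QuotSMulTop x P) n := by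
  obtain ⟨rs, rfl, hrs, hreg⟩ := h
  refine ⟨rs.map (algebraMap A (A ⧸ Ideal.span {x})), by simp, ?_,
    (isWeaklyRegular_map_algebraMap_iff _ _ rs).2 hreg⟩
  rw [← map_maximalIdeal_of_surjective _ Ideal.Quotient.mk_surjective]
  exact List.forall_mem_map.2 fun r hr => Ideal.mem_map_of_mem _ (hrs r hr)

lemma exists_mem_maximalIdeal_notMem_sq_isSMulRegular {A P : Type*} [CommRing A] [IsLocalRing A]
    [IsNoetherianRing A] [AddCommGroup P] [Module A P] [Module.Finite A P]
    [Nontrivial P] {n : ℕ} (hP : GradeGE (maximalIdeal A) P (n + 1)) :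
    ∃ x ∈ maximalIdeal A, x ∉ maximalIdeal A ^ 2 ∧ IsSMulRegular P x := by
  obtain ⟨y, hym, hy, -⟩ := hP.exists_cons
  refine exists_mem_notMem_isSMulRegular (fun hle => ?_) fun p hp hle => ?_
  · have hbot : maximalIdeal A = ⊥ := Submodule.eq_bot_of_le_smul_of_le_jacobson_bot
      (maximalIdeal A) _ (IsNoetherian.noetherian _) (hle.trans_eq (sq _))
      (maximalIdeal_le_jacobson _)
    obtain rfl : y = 0 := by simpa [hbot] using hym
    exact not_subsingleton P (IsSMulRegular.zero_iff_subsingleton.1 hy)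
  · exact notMem_of_isSMulRegular_of_mem_associatedPrimes hp hy (hle hym)

lemma free_of_gradeGE_of_span_eq_maximalIdeal {n : ℕ} {A : Type u} [CommRing A] [IsLocalRing A]
    [IsNoetherianRing A] {s : Fin n → A} (hs : Ideal.span (Set.range s) = maximalIdeal A)
    {P : Type u} [AddCommGroup P] [Module A P] [Module.Finite A P]
    (hP : GradeGE (maximalIdeal A) P n) : Module.Free A P := by
  induction n generalizing A P with
  | zero =>
    have hfield : IsField A := isField_iff_maximalIdeal_eq.2 (by simp [← hs])
    let _ := hfield.toField
    exact Module.Free.of_divisionRing A P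
  | succ n ih =>
    rcases subsingleton_or_nontrivial P with _ | _
    · infer_instance
    obtain ⟨x, hxm, hx2, hx⟩ := exists_mem_maximalIdeal_notMem_sq_isSMulRegular hP
    have := isLocalRing_quotient_span_singleton hxm
    have := Module.finitePresentation_of_finite A P
    obtain ⟨t, ht⟩ := exists_span_range_eq_maximalIdeal_quotient hs hxm hx2
    have hfin : Module.Finite (A ⧸ Ideal.span {x}) (QuotSMulTop x P) :=
      .of_restrictScalars_finite A _ _
    rw [← Module.free_quotSMulTop_iff_free A P (maximalIdeal_le_jacobson _ hxm) hx]
    exact ih ht (hP.quotSMulTop (maximalIdeal_le_jacobson _) hx).quotient_span_singleton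

end RegularLocalRing

section FactorsThroughFree

variable {R : Type*} [CommRing R] {M N X Y F C : Type*}
  [AddCommGroup M] [Module R M] [AddCommGroup N] [Module R N] [AddCommGroup X] [Module R X]
  [AddCommGroup Y] [Module R Y] [AddCommGroup F] [Module R F] [AddCommGroup C] [Module R C]

/-- `f` factors through a finitely generated free module, i.e. its stable class vanishes. -/
def FactorsThroughFree (f : M →ₗ[R] N) : Prop :=
  ∃ (n : ℕ) (g : M →ₗ[R] (Fin n → R)) (h : (Fin n → R) →ₗ[R] N), f = h ∘ₗ g

/-- Projectivity of `N` at the prime `p`, encoded without localizing: multiplication by some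
`s ∉ p` on `N` factors through a finitely generated free module. For finitely presented `N` this
says that `N_p` is projective over `R_p`. -/
def ProjectiveAt (p : Ideal R) (N : Type*) [AddCommGroup N] [Module R N] : Prop :=
  ∃ s ∉ p, FactorsThroughFree (s • LinearMap.id : N →ₗ[R] N)

lemma FactorsThroughFree.exists_lift {f : M →ₗ[R] X} (hf : FactorsThroughFree f) {π : F →ₗ[R] X}
    (hπ : Function.Surjective π) : ∃ g : M →ₗ[R] F, π ∘ₗ g = f := by
  obtain ⟨n, g, h, rfl⟩ := hf
  obtain ⟨l, rfl⟩ := Module.projective_lifting_property π h hπ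
  exact ⟨l ∘ₗ g, (LinearMap.comp_assoc ..).symm⟩

lemma FactorsThroughFree.exists_extension {u : N →ₗ[R] Y} (hu : FactorsThroughFree u)
    {φ : N →ₗ[R] F} (hφ : Function.Surjective φ.dualMap) : ∃ v : F →ₗ[R] Y, v ∘ₗ φ = u := by
  obtain ⟨n, g, h, rfl⟩ := hu
  choose c hc using fun j => hφ (LinearMap.proj j ∘ₗ g)
  have hpi : LinearMap.pi c ∘ₗ φ = g :=
    LinearMap.ext fun y => funext fun j => LinearMap.congr_fun (hc j) y
  exact ⟨h ∘ₗ LinearMap.pi c, by rw [LinearMap.comp_assoc, hpi]⟩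

lemma exists_dualMap_surjective (R N : Type*) [CommRing R] [AddCommGroup N] [Module R N]
    [Module.Finite R (Module.Dual R N)] :
    ∃ (n : ℕ) (φ : N →ₗ[R] (Fin n → R)), Function.Surjective φ.dualMap := by
  obtain ⟨n, π, hπ⟩ := Module.Finite.exists_fin' R (Module.Dual R N)
  refine ⟨n, LinearMap.pi fun i => π (Pi.single i 1), fun f => ?_⟩
  obtain ⟨c, rfl⟩ := hπ f
  refine ⟨∑ i, c i • LinearMap.proj i, ?_⟩
  nth_rw 2 [pi_eq_sum_univ' c]
  ext y
  simp

lemma exists_comp_eq_of_comp_eq_zero {φ : N →ₗ[R] F} {ψ : F →ₗ[R] C}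
    (hψ : Function.Surjective ψ) (hφψ : Function.Exact φ ψ) {u : F →ₗ[R] X} (hu : u ∘ₗ φ = 0) :
    ∃ v : C →ₗ[R] X, v ∘ₗ ψ = u :=
  (LinearMap.exact_lcomp_of_exact_of_surjective X hφψ hψ u).1 hu

lemma ProjectiveAt.of_exact {p : Ideal R} (hN : ProjectiveAt p N) {n : ℕ}
    {φ : N →ₗ[R] (Fin n → R)} {ψ : (Fin n → R) →ₗ[R] C} (hφ : Function.Surjective φ.dualMap)
    (hψ : Function.Surjective ψ) (hφψ : Function.Exact φ ψ) : ProjectiveAt p C := by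
  obtain ⟨s, hs, hfac⟩ := hN
  obtain ⟨w, hw⟩ := hfac.exists_extension hφ
  obtain ⟨v, hv⟩ := exists_comp_eq_of_comp_eq_zero (u := s • LinearMap.id - φ ∘ₗ w) hψ hφψ <| by
    rw [LinearMap.sub_comp, LinearMap.comp_assoc, hw]
    ext; simp
  refine ⟨s, hs, n, v, ψ, ?_⟩
  rw [← LinearMap.cancel_right hψ, LinearMap.comp_assoc, hv, LinearMap.comp_sub,
    ← LinearMap.comp_assoc, hφψ.linearMap_comp_eq_zero]
  ext; simp

lemma factorsThroughFree_of_exact [Module.Projective R F] {φ : N →ₗ[R] F} {ψ : F →ₗ[R] C}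
    (hφ : Function.Surjective φ.dualMap) (hψ : Function.Surjective ψ)
    (hφψ : Function.Exact φ ψ) {m : ℕ} {π : (Fin m → R) →ₗ[R] X} (hπ : Function.Surjective π)
    (h : ∀ f : N →ₗ[R] LinearMap.ker π, FactorsThroughFree f) (f : C →ₗ[R] X) :
    FactorsThroughFree f := by
  obtain ⟨g, hg⟩ := Module.projective_lifting_property π (f ∘ₗ ψ) hπ
  have hker (y : N) : (g ∘ₗ φ) y ∈ LinearMap.ker π :=
    (LinearMap.congr_fun hg (φ y)).trans (by simp [hφψ.apply_apply_eq_zero])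
  obtain ⟨w, hw⟩ := (h ((g ∘ₗ φ).codRestrict _ hker)).exists_extension hφ
  obtain ⟨v, hv⟩ := exists_comp_eq_of_comp_eq_zero (u := g - (LinearMap.ker π).subtype ∘ₗ w)
      hψ hφψ <| by
    rw [LinearMap.sub_comp, LinearMap.comp_assoc, hw, LinearMap.subtype_comp_codRestrict, sub_self]
  refine ⟨m, v, π, ?_⟩
  rw [← LinearMap.cancel_right hψ, LinearMap.comp_assoc, hv, LinearMap.comp_sub, hg,
    ← LinearMap.comp_assoc, LinearMap.comp_ker_subtype, LinearMap.zero_comp, sub_zero]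

lemma projective_of_exact [Module.Projective R F] [Module.Projective R C] {φ : N →ₗ[R] F}
    {ψ : F →ₗ[R] C} (hφ : Function.Injective φ) (hψ : Function.Surjective ψ)
    (hφψ : Function.Exact φ ψ) : Module.Projective R N := by
  have hsection := Module.projective_lifting_property ψ LinearMap.id hψ
  obtain ⟨-, l, hl⟩ := (hφψ.split_tfae'.out 0 1 rfl rfl).1 ⟨hφ, hsection⟩
  exact .of_split φ l hl

lemma factorsThroughFree_of_stSub_eq_top {R M X : Type} [CommRing R] [AddCommGroup M] [Module R M]
    [AddCommGroup X] [Module R X] [Module.Finite R X] (h : stSub R M X = ⊤) (f : M →ₗ[R] X) :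
    FactorsThroughFree f := by
  obtain ⟨n, π, hπ⟩ := Module.Finite.exists_fin' R X
  have hle : stSub R M X ≤ LinearMap.range (LinearMap.compRight R (M := M) π) := by
    refine Submodule.span_le.2 fun f hf => ?_
    obtain ⟨g, hg⟩ := FactorsThroughFree.exists_lift hf hπ
    exact ⟨g, hg⟩
  obtain ⟨g, hg⟩ := hle (h ▸ Submodule.mem_top : f ∈ stSub R M X)
  exact ⟨n, g, π, hg.symm⟩

end FactorsThroughFree

section ResidueField

variable {R : Type*} [CommRing R] {I : Ideal R} {N V : Type*} [AddCommGroup N] [Module R N]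
  [AddCommGroup V] [Module R V]

lemma factorsThroughFree_of_quotient [Nontrivial (R ⧸ I)] [Module (R ⧸ I) V]
    [IsScalarTower R (R ⧸ I) V] [Module.Free (R ⧸ I) V] [Module.Finite (R ⧸ I) V]
    (h : ∀ f : N →ₗ[R] R ⧸ I, FactorsThroughFree f) (f : N →ₗ[R] V) : FactorsThroughFree f := by
  let e := (Module.finBasis (R ⧸ I) V).equivFun.restrictScalars R
  choose g hg using fun i =>
    (h (LinearMap.proj i ∘ₗ e.toLinearMap ∘ₗ f)).exists_lift I.mkQ_surjective
  refine ⟨_, LinearMap.pi g, e.symm.toLinearMap ∘ₗ I.mkQ.compLeft _, ?_⟩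
  ext y
  refine (e.symm_apply_eq.2 (funext fun i => ?_)).symm
  exact LinearMap.congr_fun (hg i) y

lemma bijective_of_mkQ_comp_eq [Module.Finite R N] (hI : I ≤ (⊥ : Ideal R).jacobson)
    {e : N →ₗ[R] N} (he : (I • (⊤ : Submodule R N)).mkQ ∘ₗ e = (I • (⊤ : Submodule R N)).mkQ) :
    Function.Bijective e := by
  have hsurj : Function.Surjective e := by
    rw [← LinearMap.range_eq_top, eq_top_iff]
    refine Submodule.le_of_le_smul_of_le_jacobson_bot Module.Finite.fg_top hI fun y _ => ?_
    have hy : y - e y ∈ I • (⊤ : Submodule R N) :=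
      (Submodule.Quotient.eq _).1 (LinearMap.congr_fun he y).symm
    rw [← add_sub_cancel (e y) y]
    exact Submodule.add_mem_sup (LinearMap.mem_range_self e y) hy
  exact ⟨OrzechProperty.injective_of_surjective_endomorphism e hsurj, hsurj⟩

lemma projective_of_factorsThroughFree_residueField [IsLocalRing R] [Module.Finite R N]
    (h : ∀ f : N →ₗ[R] R ⧸ maximalIdeal R, FactorsThroughFree f) : Module.Projective R N := by
  let _ : Field (R ⧸ maximalIdeal R) := Ideal.Quotient.field _
  let q := (maximalIdeal R • (⊤ : Submodule R N)).mkQ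
  have hfin : Module.Finite (R ⧸ maximalIdeal R) (N ⧸ maximalIdeal R • (⊤ : Submodule R N)) :=
    .of_restrictScalars_finite R _ _
  obtain ⟨n, π, hπ⟩ := Module.Finite.exists_fin' R N
  obtain ⟨f, hf⟩ := (factorsThroughFree_of_quotient h q).exists_lift (π := q ∘ₗ π)
    ((Submodule.mkQ_surjective _).comp hπ)
  have hbij : Function.Bijective (π ∘ₗ f) :=
    bijective_of_mkQ_comp_eq (maximalIdeal_le_jacobson _) ((LinearMap.comp_assoc ..).symm.trans hf)
  let e := LinearEquiv.ofBijective _ hbij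
  exact .of_split f (e.symm.toLinearMap ∘ₗ π) (LinearMap.ext e.symm_apply_apply)

end ResidueField

section Detection

/-- `X` detects projectivity among the finitely generated modules of depth at least `n` that are
projective on the punctured spectrum: such a module is projective as soon as its stable
homomorphisms to `X` vanish. -/
def DetectsProjectivity (R : Type u) [CommRing R] [IsLocalRing R] (n : ℕ) (X : Type u)
    [AddCommGroup X] [Module R X] : Prop :=
  ∀ (N : Type u) [AddCommGroup N] [Module R N] [Module.Finite R N], GradeGE (maximalIdeal R) N n →
    (∀ p : Ideal R, p.IsPrime → p ≠ maximalIdeal R → ProjectiveAt p N) →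
    (∀ f : N →ₗ[R] X, FactorsThroughFree f) → Module.Projective R N

variable (R : Type u) [CommRing R] [IsLocalRing R]

lemma detectsProjectivity_residueField : DetectsProjectivity R 0 (R ⧸ maximalIdeal R) :=
  fun _ _ _ _ _ _ h => projective_of_factorsThroughFree_residueField h

variable {R} [IsNoetherianRing R]

lemma injective_of_dualMap_surjective {N F : Type*} [AddCommGroup N] [Module R N]
    [AddCommGroup F] [Module R F] {n : ℕ} (hN : GradeGE (maximalIdeal R) N (n + 1))
    (hproj : ∀ p : Ideal R, p.IsPrime → p ≠ maximalIdeal R → ProjectiveAt p N)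
    {φ : N →ₗ[R] F} (hφ : Function.Surjective φ.dualMap) : Function.Injective φ := by
  rw [← LinearMap.ker_eq_bot]
  by_contra hne
  have : Nontrivial (LinearMap.ker φ) := Submodule.nontrivial_iff_ne_bot.2 hne
  obtain ⟨p, hp⟩ := associatedPrimes.nonempty R (LinearMap.ker φ)
  have hpN : p ∈ associatedPrimes R N :=
    IsAssociatedPrime.map_of_injective _ hp (Submodule.injective_subtype _)
  obtain ⟨hprime, y, hy⟩ := isAssociatedPrime_iff.1 hp
  have hpm : p ≠ maximalIdeal R := by
    rintro rfl
    obtain ⟨x, hxm, hx, -⟩ := hN.exists_cons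
    exact notMem_of_isSMulRegular_of_mem_associatedPrimes hpN hx hxm
  obtain ⟨s, hs, hfac⟩ := hproj p hprime hpm
  obtain ⟨w, hw⟩ := hfac.exists_extension hφ
  have hsy : s • (y : N) = 0 := by simpa using (LinearMap.congr_fun hw y).symm
  refine hs ?_
  rw [hy, Submodule.mem_colon_singleton, Submodule.mem_bot]
  exact Subtype.ext hsy

lemma DetectsProjectivity.ker {n m : ℕ} {X : Type u} [AddCommGroup X] [Module R X]
    (hX : DetectsProjectivity R n X) (hR : GradeGE (maximalIdeal R) R n)
    {π : (Fin m → R) →ₗ[R] X} (hπ : Function.Surjective π) :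
    DetectsProjectivity R (n + 1) (LinearMap.ker π) := by
  intro N _ _ _ hN hproj hfac
  obtain ⟨k, φ, hφ⟩ := exists_dualMap_surjective R N
  let ψ := (LinearMap.range φ).mkQ
  have hφinj : Function.Injective φ := injective_of_dualMap_surjective hN hproj hφ
  have hψ : Function.Surjective ψ := Submodule.mkQ_surjective _
  have hφψ : Function.Exact φ ψ := LinearMap.exact_map_mkQ_range φ
  have hcoker : Module.Projective R ((Fin k → R) ⧸ LinearMap.range φ) :=
    hX _ (.of_exact_right (maximalIdeal_le_jacobson _) hφinj hψ hφψ hN hR.of_flat)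
      (fun p hp hpm => (hproj p hp hpm).of_exact hφ hψ hφψ)
      (factorsThroughFree_of_exact hφ hψ hφψ hπ hfac)
  exact projective_of_exact hφinj hψ hφψ

lemma exists_detectsProjectivity {n : ℕ} (hR : GradeGE (maximalIdeal R) R n) :
    ∃ X : ModuleCat.{u} R, Module.Finite R X ∧ GradeGE (maximalIdeal R) X n ∧
      DetectsProjectivity R n X := by
  have hjac := maximalIdeal_le_jacobson (⊥ : Ideal R)
  induction n with
  | zero => exact ⟨.of R (R ⧸ maximalIdeal R), inferInstanceAs (Module.Finite R (R ⧸ _)),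
      gradeGE_zero _ _, detectsProjectivity_residueField R⟩
  | succ n ih =>
    have hR' := hR.mono hjac n.le_succ
    obtain ⟨X, _, hXgrade, hX⟩ := ih hR'
    obtain ⟨m, π, hπ⟩ := Module.Finite.exists_fin' R X
    have hgrade : GradeGE (maximalIdeal R) (LinearMap.ker π) (n + 1) :=
      .of_exact_left hjac (Submodule.injective_subtype _) hπ (LinearMap.exact_subtype_ker_map π)
        hR.of_flat hXgrade
    exact ⟨.of R (LinearMap.ker π), inferInstanceAs (Module.Finite R (LinearMap.ker π)), hgrade,
      hX.ker hR' hπ⟩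

end Detection

section CohenMacaulay

-- Both inverse isomorphisms `N_p ≃ R_p ^ n` are cleared of denominators to maps between `N` and
-- `R ^ n`; their composite is multiplication by an element outside `p`, up to `p`-torsion.
lemma ProjectiveAt.of_free_localizedModule {R N : Type*} [CommRing R] (p : Ideal R) [p.IsPrime]
    [AddCommGroup N] [Module R N] [Module.FinitePresentation R N]
    [Module.Free (Localization p.primeCompl) (LocalizedModule p.primeCompl N)] :
    ProjectiveAt p N := by
  let S := p.primeCompl
  have : Nontrivial (Localization S) := inferInstanceAs (Nontrivial (Localization.AtPrime p))
  let n := Module.finrank (Localization S) (LocalizedModule S N)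
  let e : LocalizedModule S N ≃ₗ[R] (Fin n → Localization S) :=
    (Module.finBasis (Localization S) (LocalizedModule S N)).equivFun.restrictScalars R
  let c : (Fin n → R) →ₗ[R] (Fin n → Localization S) :=
    LinearMap.pi fun i => Algebra.linearMap R (Localization S) ∘ₗ LinearMap.proj i
  let ι : N →ₗ[R] LocalizedModule S N := LocalizedModule.mkLinearMap S N
  obtain ⟨g, s, hg⟩ := Module.FinitePresentation.exists_lift_of_isLocalizedModule S c
    (e.toLinearMap ∘ₗ ι)
  obtain ⟨h, t, hh⟩ := Module.FinitePresentation.exists_lift_of_isLocalizedModule S ι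
    (e.symm.toLinearMap ∘ₗ c)
  have hcomp : ι ∘ₗ h ∘ₗ g = ι ∘ₗ (((t * s : S) : R) • LinearMap.id) := by
    rw [← LinearMap.comp_assoc, hh, LinearMap.smul_comp, LinearMap.comp_assoc, hg]
    ext y
    simp [Submonoid.smul_def, smul_smul]
  obtain ⟨u, hu⟩ := Module.Finite.exists_smul_of_comp_eq_of_isLocalizedModule S ι _ _ hcomp
  refine ⟨_, (u * (t * s)).2, n, g, (u : R) • h, ?_⟩
  rw [LinearMap.smul_comp, Submonoid.coe_mul, mul_smul]
  exact hu.symm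

lemma IsRegularLocalRing.free_of_gradeGE {A : Type} [CommRing A] [IsLocalRing A]
    (hA : IsRegularLocalRing A) {n : ℕ} (hn : ringKrullDim A = n) {P : Type} [AddCommGroup P]
    [Module A P] [Module.Finite A P] (hP : GradeGE (maximalIdeal A) P n) : Module.Free A P := by
  obtain ⟨_, _, s, hs, hcard⟩ := hA
  obtain rfl : s.card = n := by exact_mod_cast hcard.trans hn
  have hrange : Set.range (fun i => (s.equivFin.symm i : A)) = s := by
    rw [← Function.comp_def, EquivLike.range_comp, Subtype.range_coe_subtype]
    rfl
  rw [jacobson_eq_maximalIdeal ⊥ bot_ne_top, ← hrange] at hs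
  exact free_of_gradeGE_of_span_eq_maximalIdeal hs hP

variable {R M : Type} [CommRing R] [IsLocalRing R] [AddCommGroup M] [Module R M] {d : ℕ}

lemma isMCM_iff (hd : ringKrullDim R = d) :
    IsMCM R M ↔ Module.Finite R M ∧ GradeGE (maximalIdeal R) M d := by
  refine and_congr_right fun _ => ?_
  rw [jacobson_eq_maximalIdeal ⊥ bot_ne_top, hd]
  constructor
  · rintro (_ | ⟨rs, hrs, hreg, hlen⟩)
    · exact .of_subsingleton _ d
    · exact ⟨rs, by exact_mod_cast hlen, hrs, hreg⟩
  · rintro ⟨rs, rfl, hrs, hreg⟩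
    exact .inr ⟨rs, hrs, hreg, rfl⟩

lemma exists_ringKrullDim_eq_natCast (R : Type*) [CommRing R] [IsNoetherianRing R]
    [IsLocalRing R] : ∃ d : ℕ, ringKrullDim R = d := by
  obtain ⟨d, hd⟩ := ENat.ne_top_iff_exists.1 (Ideal.height_ne_top (maximalIdeal.isMaximal R).ne_top)
  exact ⟨d, by rw [← maximalIdeal_height_eq_ringKrullDim, ← hd]; rfl⟩

lemma IsolatedSingularity.projectiveAt [IsNoetherianRing R] (hsing : IsolatedSingularity R)
    (hd : ringKrullDim R = d) [Module.Finite R M] (hM : GradeGE (maximalIdeal R) M d)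
    {p : Ideal R} (hp : p.IsPrime) (hpm : p ≠ maximalIdeal R) : ProjectiveAt p M := by
  have hheight : (maximalIdeal R).height = d := by
    exact_mod_cast maximalIdeal_height_eq_ringKrullDim.trans hd
  obtain ⟨n, hn⟩ := ENat.ne_top_iff_exists.1 (Ideal.height_ne_top hp.ne_top)
  have hregular := hsing p hp (by rwa [jacobson_eq_maximalIdeal ⊥ bot_ne_top])
  have : IsLocalRing (Localization p.primeCompl) := hregular.2.1
  have hdim : ringKrullDim (Localization p.primeCompl) = n := by
    rw [IsLocalization.AtPrime.ringKrullDim_eq_height p, ← hn]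
    rfl
  have hpM : GradeGE p M n := hM.of_add_le_height (c := 0) (by simp [hheight]) (by simp [hn])
  have hfree := hregular.free_of_gradeGE hdim (hpM.of_isLocalizedModule_atPrime p
    (Localization p.primeCompl) (LocalizedModule.mkLinearMap p.primeCompl M))
  have := Module.finitePresentation_of_finite R M
  exact .of_free_localizedModule p

end CohenMacaulay

/-- Lemma 2.1. Let `(R, m, k)` be a Cohen-Macaulay local ring with an
isolated singularity. Then there exists a Cohen-Macaulay `R`-module `X` such that
`stHom_R(M, X) ≠ 0` for every non-free Cohen-Macaulay `R`-module `M`. -/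
theorem exists_CM_module_with_nonzero_stHom_from_all_nonfree
    (R : Type) [CommRing R] [IsNoetherianRing R] [IsLocalRing R]
    (hCM : IsMCM R R) (hsing : IsolatedSingularity R) :
    ∃ X : ModuleCat.{0} R, IsMCM R X ∧
      ∀ (M : Type) [AddCommGroup M] [Module R M], IsMCM R M → ¬ Module.Free R M →
        Nontrivial (StHom R M (X : Type)) := by
  obtain ⟨d, hd⟩ := exists_ringKrullDim_eq_natCast R
  obtain ⟨X, hXfin, hXgrade, hX⟩ := exists_detectsProjectivity ((isMCM_iff hd).1 hCM).2
  refine ⟨X, (isMCM_iff hd).2 ⟨hXfin, hXgrade⟩, fun M _ _ hM hfree => ?_⟩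
  obtain ⟨hMfin, hMgrade⟩ := (isMCM_iff hd).1 hM
  by_contra hzero
  have hstSub : stSub R M X = ⊤ :=
    Submodule.Quotient.subsingleton_iff.1 (not_nontrivial_iff_subsingleton.1 hzero)
  have hproj : Module.Projective R M := hX M hMgrade
    (fun _ hp hpm => hsing.projectiveAt hd hMgrade hp hpm)
    (factorsThroughFree_of_stSub_eq_top hstSub)
  exact hfree Module.free_of_flat_of_isLocalRing

end Paper
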